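/- For any integers N ≥ 1 and 1 ≤ k < l, there exists an algorithm Φ using only the moves φ_k and φ_l which couples the first N balls and such that for every infinite configuration X, the rightmost bin of Φ(X) contains at least k balls, i.e. (Φ(X))(0) ≥ k. -/

import Mathlib

/-!
Configurations are handled through their cumulative counts `binSum X`, in which a move is simple
(`binSum_move`) and equality of `n`-ball projections becomes equality of the counts truncated at
`n` (`Agree`).  If `m ≤ n`, applying `φ_m` to two configurations agreeing on `n` balls makes them
agree on `n + 1` balls (`Agree.move`).

Let `per k s` be the configuration `[…, k, k, k, s]`.  The move `φ_k` permutes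
`per k 1, …, per k k` cyclically.  The total depth `depth k X` of the first `k` balls drops by one
under `φ_k` until bin `0` holds `k` balls, and a configuration with `k` balls in bin `0` agrees
with `per k k` on `k` balls.  Hence a long power of `φ_k` sends every configuration to some
`per k s`, up to any prescribed number of balls (`settle`), and it suffices to find a word in
`φ_k, φ_l` after which all the `k` configurations `per k s` have at least `k` balls in bin `0`.

The heart of the argument merges `per k k` and `per k s` (`merge_pair`).  Under powers of `φ_l`,
the total depth of the first `l` balls drops by one at each step.  Starting from `per k s` with
`s < k`, bin `0` keeps `s` balls until the first `l` balls lie in bins `0` and `1`, and then gets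
its next ball.  Starting from `per k k`, bin `0` keeps at least `k` balls until all the first `l`
balls lie in bin `0`, which takes longer (`depth_per_lt`).  Stopping right after bin `0` of the
former gets its ball, the pair has become `per k k`, `per k (s + 1)` on the first `k` balls, so that
repeating this merges the two.  Merging the `k` configurations one after the other
(`merge_all`) gives the word.
-/

open Finset

/-! Bins are indexed by `t : ℕ`, where index `t` stands for the bin labeled `-t`
in the paper (so `t = 0` is the rightmost bin).  A configuration is a function
`X : ℕ → ℕ`, `X t` being the number of balls in bin `t`. -/

/-- `binSum X t` is the number of balls in bins `0, …, t-1`, i.e. strictly to the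
right of bin `t`.  In the paper's notation this is `Σ_{j = -t+1}^{0} X(j)`. -/
def binSum (X : ℕ → ℕ) (t : ℕ) : ℕ := ∑ m ∈ Finset.range t, X m

/-- An infinite configuration: every bin contains a positive number of balls. -/
def IsInfConf (X : ℕ → ℕ) : Prop := ∀ t, 0 < X t

/-- An `n`-configuration: for some `p ≥ 1`, bins `0, …, p-1` are nonempty, all the
other bins are empty, and the total number of balls is `n`. -/
def IsNConf (n : ℕ) (X : ℕ → ℕ) : Prop :=
  ∃ p : ℕ, 1 ≤ p ∧ (∀ t, t < p → 0 < X t) ∧ (∀ t, p ≤ t → X t = 0) ∧ binSum X p = n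

/-- The `n`-ball projection `π_n`: keep the `n` rightmost balls, erase the others.
(Truncated subtraction makes the value `0` as soon as `binSum X t ≥ n`.) -/
def proj (n : ℕ) (X : ℕ → ℕ) : ℕ → ℕ := fun t => min (X t) (n - binSum X t)

/-- The move `φ_k` on infinite configurations: if the rightmost bin contains at
least `k` balls, create a new rightmost bin containing one ball (shifting
everything); otherwise add one ball to the bin immediately to the right of the
bin containing the `k`-th ball counted from the right. -/
noncomputable def move (k : ℕ) (X : ℕ → ℕ) : ℕ → ℕ :=
  if k ≤ X 0 then fun t => if t = 0 then 1 else X (t - 1)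
  else fun t => if t = sInf {b : ℕ | k ≤ binSum X (b + 1)} - 1 then X t + 1 else X t

/-- Delete one ball from the leftmost nonempty bin. -/
noncomputable def removeLeft (X : ℕ → ℕ) : ℕ → ℕ :=
  fun t => if t = sSup {b : ℕ | 0 < X b} then X t - 1 else X t

/-- The move `φ_k` on `n`-configurations: add a ball to the bin immediately to the
right of the bin containing the `k`-th ball from the right (creating a new
rightmost bin if needed), then delete one ball from the leftmost nonempty bin. -/
noncomputable def moveFin (k : ℕ) (X : ℕ → ℕ) : ℕ → ℕ := removeLeft (move k X)

/-- Apply an algorithm, i.e. a finite composition of moves, to an infinite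
configuration.  `applyAlg [k₁, …, kₘ] X = φ_{k₁}(φ_{k₂}(⋯ φ_{kₘ}(X)))`. -/
noncomputable def applyAlg (w : List ℕ) (X : ℕ → ℕ) : ℕ → ℕ := w.foldr move X

/-- Apply an algorithm to a finite configuration. -/
noncomputable def applyAlgFin (w : List ℕ) (X : ℕ → ℕ) : ℕ → ℕ := w.foldr moveFin X

/-- The configuration denoted `[a₁, …, a_p]` in the paper: the list is read from
the leftmost nonempty bin to the rightmost bin. -/
def ofList (L : List ℕ) : ℕ → ℕ := fun t => L.reverse.getD t 0

/-- The distinguished `l`-configurations `X_i` (for `l = k*d + r`, `1 ≤ r ≤ k`):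
`X_0 = [k, …, k, r]` (`d` bins of `k` balls), `X_i = [i, k, …, k, r-i]` (`d` bins
of `k` balls) for `1 ≤ i ≤ r-1`, and `X_i = [i, k, …, k, k+r-i]` (`d-1` bins of
`k` balls) for `r ≤ i ≤ k-1`. -/
def distConf (k d r i : ℕ) : ℕ → ℕ :=
  if i = 0 then ofList (List.replicate d k ++ [r])
  else if i < r then ofList (i :: (List.replicate d k ++ [r - i]))
  else ofList (i :: (List.replicate (d - 1) k ++ [k + r - i]))

/-- The `l`-configurations `Y_j`: `Y_0 = [l]` and `Y_j = [j, l-j]` for `1 ≤ j ≤ l-1`. -/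
def yConf (l j : ℕ) : ℕ → ℕ := if j = 0 then ofList [l] else ofList [j, l - j]

/-- The map `f` from the paper: `f(i) = (k - l + d·i)₊` for `0 ≤ i ≤ k-r-1` and
`f(i) = (k - (d+1)(k-i))₊` for `k-r ≤ i ≤ k-1` (truncated ℕ-subtraction realizes
the positive part). -/
def fMap (k l d r : ℕ) (i : ℕ) : ℕ :=
  if i < k - r then k + d * i - l else k - (d + 1) * (k - i)

/-- The algorithm `Ψ = φ_k^{l-k} ∘ φ_l^{dr + k·d(d-1)/2} ∘ φ_k^{k-r}` acting on
`l`-configurations. -/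
noncomputable def Psi (k l d r : ℕ) (X : ℕ → ℕ) : ℕ → ℕ :=
  (moveFin k)^[l - k] ((moveFin l)^[d * r + k * (d * (d - 1)) / 2] ((moveFin k)^[k - r] X))

/-! ### Cumulative counts -/

lemma binSum_zero (X : ℕ → ℕ) : binSum X 0 = 0 := by simp [binSum]

lemma binSum_succ (X : ℕ → ℕ) (t : ℕ) : binSum X (t + 1) = binSum X t + X t := by
  simp [binSum, Finset.sum_range_succ]

lemma binSum_one (X : ℕ → ℕ) : binSum X 1 = X 0 := by simp [binSum]

lemma binSum_mono (X : ℕ → ℕ) : Monotone (binSum X) :=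
  monotone_nat_of_le_succ fun t => by rw [binSum_succ]; omega

lemma IsInfConf.le_binSum {X : ℕ → ℕ} (hX : IsInfConf X) (t : ℕ) : t ≤ binSum X t := by
  induction t with
  | zero => simp
  | succ t ih => rw [binSum_succ]; have := hX t; omega

/-- Adding one ball to bin `c` adds one to the cumulative counts beyond `c`. -/
lemma binSum_add_ball (X : ℕ → ℕ) (c t : ℕ) :
    binSum (fun u => if u = c then X u + 1 else X u) t
      = binSum X t + if c < t then 1 else 0 := by
  induction t with
  | zero => simp [binSum_zero]
  | succ t ih =>
    rw [binSum_succ, binSum_succ, ih]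
    split_ifs <;> omega

/-- The effect of `φ_m` on cumulative counts. The condition `m ≤ binSum X (t + 1)` says that the
`m`-th ball lies in one of the bins `0, …, t`. -/
lemma binSum_move {X : ℕ → ℕ} (hX : IsInfConf X) (m t : ℕ) :
    binSum (move m X) (t + 1) =
      if m ≤ X 0 then binSum X t + 1
      else binSum X (t + 1) + if m ≤ binSum X (t + 2) then 1 else 0 := by
  unfold move
  split_ifs with h0 h1
  · induction t with
    | zero => simp [binSum]
    | succ t ih => rw [binSum_succ, ih, binSum_succ]; simp; omega
  all_goals
    rw [binSum_add_ball]
    have hne : {b : ℕ | m ≤ binSum X (b + 1)}.Nonempty :=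
      ⟨m, (Nat.le_succ m).trans (hX.le_binSum _)⟩
    have hmem : m ≤ binSum X (sInf {b : ℕ | m ≤ binSum X (b + 1)} + 1) := Nat.sInf_mem hne
    have hpos : sInf {b : ℕ | m ≤ binSum X (b + 1)} ≠ 0 := by
      intro h
      rw [h, zero_add, binSum_one] at hmem
      exact h0 hmem
  · have : sInf {b : ℕ | m ≤ binSum X (b + 1)} ≤ t + 1 := Nat.sInf_le h1
    rw [if_pos (by omega)]
  · have : ¬ sInf {b : ℕ | m ≤ binSum X (b + 1)} ≤ t + 1 := fun h =>
      h1 (hmem.trans (binSum_mono X (by omega)))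
    rw [if_neg (by omega)]

lemma IsInfConf.move {X : ℕ → ℕ} (hX : IsInfConf X) (m : ℕ) : IsInfConf (move m X) := by
  intro t
  unfold _root_.move
  split_ifs
  · dsimp only
    split_ifs
    · exact one_pos
    · exact hX _
  · dsimp only
    split_ifs
    · omega
    · exact hX _

lemma IsInfConf.iterate {X : ℕ → ℕ} (hX : IsInfConf X) (m a : ℕ) :
    IsInfConf ((_root_.move m)^[a] X) := by
  induction a with
  | zero => exact hX
  | succ a ih => rw [Function.iterate_succ_apply']; exact ih.move m

lemma IsInfConf.applyAlg {X : ℕ → ℕ} (hX : IsInfConf X) (w : List ℕ) :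
    IsInfConf (applyAlg w X) := by
  induction w with
  | nil => exact hX
  | cons a w ih => exact IsInfConf.move ih a

/-! ### Agreement on the first balls -/

/-- The configurations `X` and `Y` have the same `n`-ball projection, expressed through cumulative
counts truncated at `n` (see `Agree.proj_eq`). -/
def Agree (n : ℕ) (X Y : ℕ → ℕ) : Prop := ∀ t, min n (binSum X t) = min n (binSum Y t)

lemma Agree.symm {n : ℕ} {X Y : ℕ → ℕ} (h : Agree n X Y) : Agree n Y X := fun t => (h t).symm

lemma Agree.trans {n : ℕ} {X Y Z : ℕ → ℕ} (h : Agree n X Y) (h' : Agree n Y Z) : Agree n X Z :=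
  fun t => (h t).trans (h' t)

lemma Agree.mono {n m : ℕ} {X Y : ℕ → ℕ} (h : Agree n X Y) (hm : m ≤ n) : Agree m X Y := by
  intro t
  have := h t
  omega

lemma Agree.proj_eq {n : ℕ} {X Y : ℕ → ℕ} (h : Agree n X Y) : proj n X = proj n Y := by
  funext t
  have h1 := h t
  have h2 := h (t + 1)
  rw [binSum_succ, binSum_succ] at h2
  unfold proj
  omega

lemma Agree.le_zero {n k : ℕ} {X Y : ℕ → ℕ} (h : Agree n X Y) (hk : k ≤ n) (hY : k ≤ Y 0) :
    k ≤ X 0 := by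
  have := h 1
  rw [binSum_one, binSum_one] at this
  omega

/-- Each move adds one ball to the zone of agreement. -/
lemma Agree.move {n m : ℕ} {X Y : ℕ → ℕ} (h : Agree n X Y) (hm : m ≤ n)
    (hX : IsInfConf X) (hY : IsInfConf Y) : Agree (n + 1) (move m X) (move m Y) := by
  intro t
  cases t with
  | zero => simp [binSum_zero]
  | succ t =>
    rw [binSum_move hX, binSum_move hY]
    have h0 := h t
    have h1 := h (t + 1)
    have h2 := h (t + 2)
    have h3 := h 1
    have h4 : binSum X (t + 1) ≤ binSum X (t + 2) := binSum_mono X (by omega)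
    have h5 : binSum Y (t + 1) ≤ binSum Y (t + 2) := binSum_mono Y (by omega)
    rw [binSum_one, binSum_one] at h3
    split_ifs <;> omega

lemma Agree.iterate {n m : ℕ} {X Y : ℕ → ℕ} (h : Agree n X Y) (hm : m ≤ n)
    (hX : IsInfConf X) (hY : IsInfConf Y) (a : ℕ) :
    Agree (n + a) ((_root_.move m)^[a] X) ((_root_.move m)^[a] Y) := by
  induction a with
  | zero => exact h
  | succ a ih =>
    rw [Function.iterate_succ_apply', Function.iterate_succ_apply']
    exact ih.move (by omega) (hX.iterate m a) (hY.iterate m a)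

lemma Agree.applyAlg {n : ℕ} {X Y : ℕ → ℕ} (h : Agree n X Y) {w : List ℕ}
    (hw : ∀ j ∈ w, j ≤ n) (hX : IsInfConf X) (hY : IsInfConf Y) :
    Agree n (applyAlg w X) (applyAlg w Y) := by
  induction w with
  | nil => exact h
  | cons a w ih =>
    have ih' := ih fun j hj => hw j (List.mem_cons_of_mem _ hj)
    exact (Agree.move ih' (hw a List.mem_cons_self) (hX.applyAlg w) (hY.applyAlg w)).mono
      (Nat.le_succ n)

lemma applyAlg_append (v w : List ℕ) (X : ℕ → ℕ) :
    applyAlg (v ++ w) X = applyAlg v (applyAlg w X) := by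
  simp [applyAlg, List.foldr_append]

lemma applyAlg_replicate (a m : ℕ) (X : ℕ → ℕ) :
    applyAlg (List.replicate a m) X = (move m)^[a] X := by
  induction a with
  | zero => rfl
  | succ a ih =>
    rw [List.replicate_succ, Function.iterate_succ_apply', ← ih]
    rfl

/-! ### Total depth of the first balls -/

/-- The sum of the indices of the bins containing the first `n` balls of `X`: the `t`-th term is
the number of those balls lying beyond bin `t`. Terms with `t ≥ n` vanish, as bins are nonempty. -/
def depth (n : ℕ) (X : ℕ → ℕ) : ℕ := ∑ t ∈ Finset.range n, (n - binSum X (t + 1))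

/-- The move `φ_n` brings the first `n` balls closer to bin `0` by one bin in total, unless they
all lie in bin `0`. -/
lemma depth_move {n : ℕ} {X : ℕ → ℕ} (hX : IsInfConf X) (h : X 0 < n) :
    depth n (move n X) + 1 = depth n X := by
  -- `b` is the bin of the `n`-th ball; only the term of bin `b - 1` changes.
  have hex : ∃ b, n ≤ binSum X (b + 1) := ⟨n, (Nat.le_succ n).trans (hX.le_binSum _)⟩
  obtain ⟨b, hb, hmin⟩ : ∃ b, n ≤ binSum X (b + 1) ∧ ∀ c < b, binSum X (c + 1) < n :=
    ⟨Nat.find hex, Nat.find_spec hex, fun c hc => not_le.1 (Nat.find_min hex hc)⟩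
  obtain ⟨c, rfl⟩ : ∃ c, b = c + 1 := by
    cases b with
    | zero => rw [zero_add, binSum_one] at hb; omega
    | succ c => exact ⟨c, rfl⟩
  have hc := hmin c (Nat.lt_succ_self c)
  have hcn : c ∈ Finset.range n := by
    rw [Finset.mem_range]; have := hX.le_binSum (c + 1); omega
  unfold depth
  rw [← Finset.add_sum_erase _ _ hcn, ← Finset.add_sum_erase _ _ hcn]
  have hrest : ∑ t ∈ (Finset.range n).erase c, (n - binSum (move n X) (t + 1))
      = ∑ t ∈ (Finset.range n).erase c, (n - binSum X (t + 1)) := by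
    refine Finset.sum_congr rfl fun t ht => ?_
    rw [binSum_move hX, if_neg (by omega)]
    have htc := (Finset.mem_erase.1 ht).1
    rcases lt_or_gt_of_ne htc with hlt | hgt
    · have : binSum X (t + 2) < n := hmin (t + 1) (by omega)
      rw [if_neg (by omega)]; rfl
    · have : binSum X (c + 1 + 1) ≤ binSum X (t + 1) := binSum_mono X (by omega)
      omega
  rw [hrest, binSum_move hX, if_neg (by omega), if_pos hb]
  omega

lemma depth_eq_zero {n : ℕ} {X : ℕ → ℕ} (h : n ≤ X 0) : depth n X = 0 := by
  refine Finset.sum_eq_zero fun t _ => ?_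
  have : binSum X 1 ≤ binSum X (t + 1) := binSum_mono X (by omega)
  rw [binSum_one] at this
  omega

lemma depth_le (n : ℕ) (X : ℕ → ℕ) : depth n X ≤ n * n := by
  calc depth n X ≤ ∑ _t ∈ Finset.range n, n := Finset.sum_le_sum fun t _ => Nat.sub_le _ _
    _ = n * n := by simp

lemma exists_full {n : ℕ} {X : ℕ → ℕ} (hX : IsInfConf X) :
    ∃ a ≤ depth n X, n ≤ (move n)^[a] X 0 := by
  induction hd : depth n X generalizing X with
  | zero =>
    refine ⟨0, le_rfl, ?_⟩
    by_contra hlt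
    have := depth_move hX (not_le.1 hlt)
    omega
  | succ d ih =>
    by_cases h : n ≤ X 0
    · exact ⟨0, Nat.zero_le _, h⟩
    · have := depth_move hX (not_le.1 h)
      obtain ⟨a, ha, hfull⟩ := ih (hX.move n) (by omega)
      exact ⟨a + 1, by omega, by rwa [Function.iterate_succ_apply]⟩

/-! ### The periodic configurations -/

/-- The configuration `[…, k, k, k, s]`. -/
def per (k s : ℕ) : ℕ → ℕ := fun t => if t = 0 then s else k

lemma per_inf {k s : ℕ} (hk : 1 ≤ k) (hs : 1 ≤ s) : IsInfConf (per k s) := by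
  intro t; unfold per; split_ifs <;> omega

lemma binSum_per (k s t : ℕ) : binSum (per k s) (t + 1) = s + k * t := by
  induction t with
  | zero => simp [binSum_one, per]
  | succ t ih => rw [binSum_succ, ih]; simp [per]; ring

/-- A configuration is determined by its cumulative counts. -/
lemma eq_of_binSum {X Y : ℕ → ℕ} (h : ∀ t, binSum X (t + 1) = binSum Y (t + 1)) : X = Y := by
  have h' : ∀ t, binSum X t = binSum Y t := by
    intro t
    cases t with
    | zero => simp [binSum_zero]
    | succ t => exact h t
  funext t
  have h1 := h' t
  have h2 := h' (t + 1)
  rw [binSum_succ, binSum_succ] at h2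
  omega

lemma move_per {k s : ℕ} (hs : 1 ≤ s) (hsk : s < k) : move k (per k s) = per k (s + 1) := by
  refine eq_of_binSum fun t => ?_
  rw [binSum_move (per_inf (by omega) hs), if_neg (by simp [per]; omega), binSum_per,
    binSum_per, binSum_per, if_pos (by nlinarith [Nat.zero_le (k * t)])]
  ring

lemma move_per_full {k : ℕ} (hk : 1 ≤ k) : move k (per k k) = per k 1 := by
  refine eq_of_binSum fun t => ?_
  rw [binSum_move (per_inf hk hk), if_pos (by simp [per]), binSum_per]
  cases t with
  | zero => simp [binSum_zero]
  | succ t => rw [binSum_per]; ring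

lemma iterate_per_add {k s a : ℕ} (hs : 1 ≤ s) (h : s + a ≤ k) :
    (move k)^[a] (per k s) = per k (s + a) := by
  induction a with
  | zero => rfl
  | succ a ih =>
    rw [Function.iterate_succ_apply', ih (by omega), move_per (by omega) (by omega)]
    rfl

lemma exists_iterate_per {k : ℕ} (hk : 1 ≤ k) (a : ℕ) :
    ∃ e, 1 ≤ e ∧ e ≤ k ∧ (move k)^[a] (per k k) = per k e := by
  induction a with
  | zero => exact ⟨k, hk, le_rfl, rfl⟩
  | succ a ih =>
    obtain ⟨e, he1, hek, he⟩ := ih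
    rw [Function.iterate_succ_apply', he]
    rcases hek.lt_or_eq with h | rfl
    · exact ⟨e + 1, by omega, h, move_per he1 h⟩
    · exact ⟨1, le_rfl, hk, move_per_full hk⟩

lemma iterate_per_period {k s : ℕ} (hs : 1 ≤ s) (hsk : s ≤ k) (r : ℕ) :
    (move k)^[k * r] (per k s) = per k s := by
  rw [Function.iterate_mul]
  refine Function.iterate_fixed ?_ r
  -- A period: fill bin `0` up to `k`, open a new bin, fill it up to `s`.
  have h1 : (move k)^[k] = (move k)^[(s - 1) + (1 + (k - s))] := by
    congr 1; omega
  rw [h1, Function.iterate_add_apply, Function.iterate_add_apply, iterate_per_add hs (by omega),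
    show s + (k - s) = k by omega, Function.iterate_one, move_per_full (by omega),
    iterate_per_add le_rfl (by omega), show 1 + (s - 1) = s by omega]

lemma agree_per {k s : ℕ} {X : ℕ → ℕ} (h1 : binSum X 1 = s) (h2 : k ≤ binSum X 2) :
    Agree k X (per k s) := by
  intro t
  match t with
  | 0 => simp [binSum_zero]
  | 1 => rw [h1, binSum_per]; simp
  | t + 2 =>
    have h3 : binSum X 2 ≤ binSum X (t + 2) := binSum_mono X (by omega)
    have h4 : k ≤ binSum (per k s) (t + 2) := by
      rw [show t + 2 = (t + 1) + 1 from rfl, binSum_per]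
      nlinarith [Nat.zero_le (k * t)]
    omega

lemma agree_per_full {k : ℕ} {X : ℕ → ℕ} (h : k ≤ X 0) : Agree k X (per k k) := by
  intro t
  cases t with
  | zero => simp [binSum_zero]
  | succ t =>
    have h3 : binSum X 1 ≤ binSum X (t + 1) := binSum_mono X (by omega)
    rw [binSum_one] at h3
    rw [binSum_per]
    omega

/-- Agreement with `per k s` on `k` balls extends to any number of balls by going through
enough periods of `φ_k`. -/
lemma Agree.lift {k s n r : ℕ} {X : ℕ → ℕ} (h : Agree k X (per k s)) (hX : IsInfConf X)
    (hs : 1 ≤ s) (hsk : s ≤ k) (hr : n ≤ k + k * r) :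
    Agree n ((_root_.move k)^[k * r] X) (per k s) := by
  have := h.iterate le_rfl hX (per_inf (hs.trans hsk) hs) (k * r)
  rw [iterate_per_period hs hsk] at this
  exact this.mono hr

/-- A long power of `φ_k` sends every configuration to a periodic one, as far as the first `n`
balls are concerned. -/
lemma settle {k n M : ℕ} {X : ℕ → ℕ} (hk : 1 ≤ k) (hX : IsInfConf X) (hM : k * k + n ≤ M) :
    ∃ e, 1 ≤ e ∧ e ≤ k ∧ Agree n ((move k)^[M] X) (per k e) := by
  obtain ⟨a, ha, hfull⟩ := exists_full (n := k) hX
  have hle := depth_le k X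
  obtain ⟨e, he1, hek, he⟩ := exists_iterate_per hk (M - a)
  refine ⟨e, he1, hek, ?_⟩
  have := (agree_per_full hfull).iterate le_rfl (hX.iterate k a) (per_inf hk hk) (M - a)
  rw [he, ← Function.iterate_add_apply, show M - a + a = M by omega] at this
  exact this.mono (by omega)

/-! ### Merging -/

/-- Powers of `φ_l` keep at least `k` balls in bin `0` as long as the first `l` balls are not all
in bin `0`. -/
lemma full_iterate {k l a : ℕ} {X : ℕ → ℕ} (hX : IsInfConf X) (h : k ≤ X 0)
    (ha : a ≤ depth l X) : k ≤ (move l)^[a] X 0 := by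
  induction a generalizing X with
  | zero => exact h
  | succ a ih =>
    have hlt : X 0 < l := by
      by_contra hge
      have := depth_eq_zero (not_lt.1 hge)
      omega
    have hd := depth_move hX hlt
    rw [Function.iterate_succ_apply]
    refine ih (hX.move l) ?_ (by omega)
    have := binSum_move hX l 0
    rw [zero_add, binSum_one, binSum_one, if_neg (by omega)] at this
    omega

lemma depth_split {l : ℕ} (hl : 2 ≤ l) (X : ℕ → ℕ) :
    depth l X = (l - binSum X 1) + ((l - binSum X 2)
      + ∑ t ∈ Finset.range (l - 2), (l - binSum X (t + 3))) := by
  obtain ⟨p, rfl⟩ : ∃ p, l = p + 2 := ⟨l - 2, by omega⟩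
  unfold depth
  rw [Finset.sum_range_succ', Finset.sum_range_succ']
  simp only [zero_add, Nat.add_sub_cancel, Nat.reduceAdd, Nat.add_assoc]
  omega

/-- With `s` balls in bin `0`, the powers of `φ_l` leave bin `0` unchanged until the first `l` balls
lie in bins `0` and `1`, i.e. have total depth `l - s`; the next `φ_l` then adds a ball to bin
`0`. -/
lemma partial_iterate {k l s a : ℕ} {X : ℕ → ℕ} (hX : IsInfConf X) (hsl : s < l) (hl : 2 ≤ l)
    (h1 : binSum X 1 = s) (h2 : k ≤ binSum X 2) (ha : depth l X = (l - s) + a) :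
    binSum ((move l)^[a + 1] X) 1 = s + 1 ∧ k ≤ binSum ((move l)^[a + 1] X) 2 := by
  induction a generalizing X with
  | zero =>
    have h0 : X 0 = s := by rw [← h1, binSum_one]
    have hm1 : binSum (move l X) 1 = _ := binSum_move hX l 0
    have hm2 : binSum (move l X) 2 = _ := binSum_move hX l 1
    have hle : l ≤ binSum X 2 := by
      rw [depth_split hl, h1] at ha
      omega
    rw [if_neg (by omega)] at hm1 hm2
    norm_num at hm1 hm2
    rw [if_pos hle] at hm1
    rw [zero_add, Function.iterate_one]
    omega
  | succ a ih =>
    have h0 : X 0 = s := by rw [← h1, binSum_one]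
    have hm1 : binSum (move l X) 1 = _ := binSum_move hX l 0
    have hm2 : binSum (move l X) 2 = _ := binSum_move hX l 1
    have hlt : binSum X 2 < l := by
      by_contra hge
      have hz : ∑ t ∈ Finset.range (l - 2), (l - binSum X (t + 3)) = 0 := by
        refine Finset.sum_eq_zero fun t _ => ?_
        have : binSum X 2 ≤ binSum X (t + 3) := binSum_mono X (by omega)
        omega
      rw [depth_split hl, h1, hz] at ha
      omega
    rw [if_neg (by omega)] at hm1 hm2
    norm_num at hm1 hm2
    rw [if_neg (by omega)] at hm1
    have hd := depth_move hX (show X 0 < l by omega)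
    rw [Function.iterate_succ_apply]
    exact ih (hX.move l) (by omega) (by omega) (by omega)

/-- Bin `0` of `per k s` gets its next ball strictly before the first `l` balls of `per k k` are
all in bin `0`. -/
lemma depth_per_lt {k l s : ℕ} (hs : 1 ≤ s) (hkl : k < l) :
    depth l (per k s) < (l - s) + depth l (per k k) := by
  obtain ⟨p, rfl⟩ : ∃ p, l = p + 1 := ⟨l - 1, by omega⟩
  have e1 : depth (p + 1) (per k s) =
      ∑ t ∈ Finset.range p, (p + 1 - (s + k * (t + 1))) + (p + 1 - s) := by
    unfold depth
    simp only [binSum_per]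
    rw [Finset.sum_range_succ']
    simp
  have e2 : depth (p + 1) (per k k) =
      ∑ t ∈ Finset.range p, (p + 1 - (k + k * t)) + (p + 1 - (k + k * p)) := by
    unfold depth
    simp only [binSum_per]
    rw [Finset.sum_range_succ]
  rw [e1, e2]
  rcases Nat.eq_zero_or_pos p with rfl | hp
  · have : k = 0 := by omega
    subst this
    simp
  · have : ∑ t ∈ Finset.range p, (p + 1 - (s + k * (t + 1)))
        < ∑ t ∈ Finset.range p, (p + 1 - (k + k * t)) := by
      refine Finset.sum_lt_sum (fun t _ => ?_) ⟨0, Finset.mem_range.2 hp, ?_⟩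
      · rw [mul_add]; omega
      · simp; omega
    omega

/-- The word `w` consists of `k`'s and `l`'s. -/
def Uses (k l : ℕ) (w : List ℕ) : Prop := ∀ j ∈ w, j = k ∨ j = l

lemma Uses.append {k l : ℕ} {v w : List ℕ} (hv : Uses k l v) (hw : Uses k l w) :
    Uses k l (v ++ w) := fun j hj => (List.mem_append.1 hj).elim (hv j) (hw j)

lemma uses_replicate_left (k l a : ℕ) : Uses k l (List.replicate a k) :=
  fun _ hj => Or.inl (List.eq_of_mem_replicate hj)

lemma uses_replicate_right (k l a : ℕ) : Uses k l (List.replicate a l) :=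
  fun _ hj => Or.inr (List.eq_of_mem_replicate hj)

/-- Words in `φ_k, φ_l` with `k ≤ l` only see the first `l` balls when filling bin `0`. -/
lemma Agree.full_applyAlg {k l : ℕ} {X Y : ℕ → ℕ} {w : List ℕ} (h : Agree l X Y)
    (hw : Uses k l w) (hkl : k ≤ l) (hX : IsInfConf X) (hY : IsInfConf Y)
    (hfull : k ≤ _root_.applyAlg w Y 0) : k ≤ _root_.applyAlg w X 0 := by
  have hle : ∀ j ∈ w, j ≤ l := fun j hj => by rcases hw j hj with rfl | rfl <;> omega
  exact (h.applyAlg hle hX hY).le_zero hkl hfull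

lemma merge_pair {k l : ℕ} (hkl : k < l) (g : ℕ) : ∀ s, 1 ≤ s → s + g = k →
    ∃ w, Uses k l w ∧ k ≤ applyAlg w (per k k) 0 ∧ k ≤ applyAlg w (per k s) 0 := by
  induction g with
  | zero =>
    intro s hs hsk
    obtain rfl : s = k := by omega
    exact ⟨[], fun j hj => by simp at hj, by simp [applyAlg, per], by simp [applyAlg, per]⟩
  | succ g ih =>
    intro s hs hsk
    have hk : 1 ≤ k := by omega
    obtain ⟨w, hw, hwk, hws⟩ := ih (s + 1) (by omega) (by omega)
    have hP := per_inf hk hk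
    have hQ := per_inf hk hs
    -- `a + 1` powers of `φ_l` add one ball to bin `0` of `per k s`.
    obtain ⟨a, ha⟩ : ∃ a, depth l (per k s) = (l - s) + a := by
      refine ⟨depth l (per k s) - (l - s), ?_⟩
      have : l - s ≤ depth l (per k s) := by
        have hsingle := Finset.single_le_sum (f := fun t => l - binSum (per k s) (t + 1))
          (fun _ _ => Nat.zero_le _) (Finset.mem_range.2 (show 0 < l by omega))
        simpa [depth, binSum_per] using hsingle
      omega
    have hlt := depth_per_lt hs hkl
    have hfull := full_iterate (k := k) (a := a + 1) hP (by simp [per])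
      (show a + 1 ≤ depth l (per k k) by omega)
    obtain ⟨hp1, hp2⟩ := partial_iterate (k := k) hQ (by omega) (by omega)
      (by simpa using binSum_per k s 0) (by rw [binSum_per k s 1]; omega) ha
    have hrl : l ≤ k + k * l := by nlinarith
    have hA := (agree_per_full hfull).lift (hP.iterate l _) hk le_rfl hrl
    have hB := (agree_per hp1 hp2).lift (hQ.iterate l _) (by omega) (by omega) hrl
    refine ⟨w ++ (List.replicate (k * l) k ++ List.replicate (a + 1) l),
      hw.append ((uses_replicate_left k l _).append (uses_replicate_right k l _)), ?_, ?_⟩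
    · rw [applyAlg_append, applyAlg_append, applyAlg_replicate, applyAlg_replicate]
      exact hA.full_applyAlg hw hkl.le ((hP.iterate l _).iterate k _) hP hwk
    · rw [applyAlg_append, applyAlg_append, applyAlg_replicate, applyAlg_replicate]
      exact hB.full_applyAlg hw hkl.le ((hQ.iterate l _).iterate k _)
        (per_inf hk (by omega)) hws

/-- One word fills bin `0` of all the configurations `per k i` at once. -/
lemma merge_all {k l : ℕ} (hk : 1 ≤ k) (hkl : k < l) (j : ℕ) (hj : j ≤ k) :
    ∃ w, Uses k l w ∧ ∀ i, 1 ≤ i → i ≤ j → k ≤ applyAlg w (per k i) 0 := by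
  induction j with
  | zero => exact ⟨[], fun j hj => by simp at hj, fun i h1 h2 => by omega⟩
  | succ j ih =>
    obtain ⟨w, hw, hfull⟩ := ih (by omega)
    have hZ : IsInfConf (applyAlg w (per k (j + 1))) := (per_inf hk (by omega)).applyAlg w
    have hM : k * k + l ≤ k * (k + l) := by nlinarith
    -- After `w` and whole periods of `φ_k`, the configurations `per k i`, `i ≤ j`, are back at
    -- `per k k`, while `per k (j + 1)` is at some `per k e`.
    obtain ⟨e, he1, hek, he⟩ := settle hk hZ hM
    obtain ⟨v, hv, hvk, hve⟩ := merge_pair hkl (k - e) e he1 (by omega)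
    refine ⟨v ++ (List.replicate (k * (k + l)) k ++ w),
      hv.append ((uses_replicate_left k l _).append hw), fun i hi1 hij => ?_⟩
    rw [applyAlg_append, applyAlg_append, applyAlg_replicate]
    rcases hij.lt_or_eq with hlt | rfl
    · have hI : IsInfConf (applyAlg w (per k i)) := (per_inf hk hi1).applyAlg w
      have hag := (agree_per_full (hfull i hi1 (by omega))).lift (n := l) (r := k + l) hI hk le_rfl
        (by nlinarith)
      exact hag.full_applyAlg hv hkl.le (hI.iterate k _) (per_inf hk hk) hvk
    · exact he.full_applyAlg hv hkl.le (hZ.iterate k _) (per_inf hk he1) hve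

/-- For any `N ≥ 1` and `1 ≤ k < l` there is an algorithm `Φ`
using only the moves `φ_k` and `φ_l` which couples the first `N` balls and such
that for every infinite configuration `X`, the rightmost bin of `Φ(X)` contains
at least `k` balls. -/
theorem coupling_algorithm_with_full_rightmost_bin (N k l : ℕ) (hN : 1 ≤ N)
    (hk : 1 ≤ k) (hkl : k < l) :
    ∃ w : List ℕ, (∀ j ∈ w, j = k ∨ j = l) ∧
      (∀ X Y : ℕ → ℕ, IsInfConf X → IsInfConf Y →
        proj N (applyAlg w X) = proj N (applyAlg w Y)) ∧
      (∀ X : ℕ → ℕ, IsInfConf X → k ≤ applyAlg w X 0) := by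
  obtain ⟨w, hw, hfull⟩ := merge_all hk hkl k le_rfl
  have key : ∀ X : ℕ → ℕ, IsInfConf X →
      Agree (k + k * N)
        (applyAlg (List.replicate (k * N) k ++ (w ++ List.replicate (k * k + l) k)) X)
        (per k k) := by
    intro X hX
    obtain ⟨e, he1, hek, he⟩ := settle hk hX (le_refl (k * k + l))
    have hX' := hX.iterate k (k * k + l)
    rw [applyAlg_append, applyAlg_append, applyAlg_replicate, applyAlg_replicate]
    exact (agree_per_full (he.full_applyAlg hw hkl.le hX' (per_inf hk he1) (hfull e he1 hek))).lift
      (hX'.applyAlg w) hk le_rfl le_rfl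
  refine ⟨List.replicate (k * N) k ++ (w ++ List.replicate (k * k + l) k),
    (uses_replicate_left k l _).append (hw.append (uses_replicate_left k l _)),
    fun X Y hX hY => ?_, fun X hX => ?_⟩
  · have hN' : N ≤ k + k * N := by nlinarith
    exact (((key X hX).trans (key Y hY).symm).mono hN').proj_eq
  · exact (key X hX).le_zero (Nat.le_add_right _ _) (by simp [per])
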